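/- Let λ be an even partition of length r. For every fixed integer k, the real zeros of the exceptional Hermite polynomials of odd degree satisfy the scaling limit lim_{n→∞} 2√n · x_{k+n+1−|λ|/2, 2n+1} = kπ, where x_{1,m} < x_{2,m} < ⋯ < x_{m−|λ|,m} denote the real zeros of P_m arranged in increasing order (for m ≥ |λ|+λ_1 there are exactly m−|λ| of them). -/

import Mathlib

open Polynomial

/-- The physicists' Hermite polynomials: `H 0 = 1`, `H (n+1) = 2X * H n - (H n)'`. -/
noncomputable def physHermite : ℕ → Polynomial ℝ
  | 0 => 1
  | n + 1 => 2 * X * physHermite n - derivative (physHermite n)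

/-- Wronskian determinant of a finite family of polynomials. -/
noncomputable def Wron {m : ℕ} (f : Fin m → Polynomial ℝ) : Polynomial ℝ :=
  Matrix.det (Matrix.of fun i j : Fin m => (fun p => derivative p)^[(i : ℕ)] (f j))

/-- `lam : Fin r → ℕ` is a partition: weakly decreasing with positive parts. -/
def IsPartition (r : ℕ) (lam : Fin r → ℕ) : Prop :=
  (∀ i j : Fin r, i ≤ j → lam j ≤ lam i) ∧ ∀ i, 1 ≤ lam i

/-- An even (double) partition: `r` even and `λ_{2k-1} = λ_{2k}`. -/
def IsEvenPartition (r : ℕ) (lam : Fin r → ℕ) : Prop :=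
  IsPartition r lam ∧ Even r ∧
    ∀ k : ℕ, ∀ h : 2 * k + 1 < r, lam ⟨2 * k, by omega⟩ = lam ⟨2 * k + 1, h⟩

/-- The generalized Hermite polynomial `H_λ = Wr[H_{λ_r}, H_{λ_{r-1}+1}, …, H_{λ_1+r-1}]`. -/
noncomputable def genHermite (r : ℕ) (lam : Fin r → ℕ) : Polynomial ℝ :=
  Wron fun j : Fin r => physHermite (lam (Fin.rev j) + j)

/-- The exceptional Hermite polynomial
`P_n = Wr[H_{λ_r}, H_{λ_{r-1}+1}, …, H_{λ_1+r-1}, H_{n-|λ|+r}]`. -/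
noncomputable def XHermite (r : ℕ) (lam : Fin r → ℕ) (n : ℕ) : Polynomial ℝ :=
  Wron fun j : Fin (r + 1) =>
    if h : (j : ℕ) < r then physHermite (lam (Fin.rev ⟨(j : ℕ), h⟩) + j)
    else physHermite (n + r - ∑ i, lam i)

/-- The degree sequence `N_λ`: `n ≥ |λ| - r` and `n ≠ |λ| + λ_j - j` for `j = 1, …, r`. -/
def XDegSeq (r : ℕ) (lam : Fin r → ℕ) (n : ℕ) : Prop :=
  (∑ i, lam i) ≤ n + r ∧ ∀ i : Fin r, n ≠ (∑ i, lam i) + lam i - ((i : ℕ) + 1)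

lemma deriv_physHermite (n : ℕ) :
    derivative (physHermite (n+1)) = 2 * ((n:ℝ[X]) + 1) * physHermite n := by
  induction n with
  | zero => simp [physHermite]
  | succ n ih =>
    rw [physHermite]
    simp only [derivative_sub, derivative_mul, derivative_X, derivative_ofNat]
    rw [ih]
    have : derivative (2 * ((n:ℝ[X]) + 1) * physHermite n)
        = 2 * ((n:ℝ[X]) + 1) * derivative (physHermite n) := by
      simp [derivative_mul]
    rw [this]
    have h : physHermite (n+1) = 2 * X * physHermite n - derivative (physHermite n) := rfl
    have h' : derivative (physHermite n) = 2 * X * physHermite n - physHermite (n+1) := by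
      rw [h]; ring
    rw [h']
    push_cast
    ring

lemma physHermite_ode (n : ℕ) :
    derivative (derivative (physHermite n)) = 2 * X * derivative (physHermite n)
      - 2 * (n:ℝ[X]) * physHermite n := by
  have h : derivative (physHermite n) = 2 * X * physHermite n - physHermite (n+1) := by
    rw [physHermite]; ring
  have h2 := congrArg derivative h
  rw [derivative_sub, deriv_physHermite] at h2
  simp only [derivative_mul, derivative_X, derivative_ofNat] at h2
  rw [h2]; ring

lemma physHermite_ode_iter (n i : ℕ) :
    derivative^[i+2] (physHermite n) = 2 * X * derivative^[i+1] (physHermite n)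
      - 2 * ((n:ℝ[X]) - (i:ℝ[X])) * derivative^[i] (physHermite n) := by
  induction i with
  | zero => simpa using physHermite_ode n
  | succ i ih =>
    rw [Function.iterate_succ_apply', ih, derivative_sub]
    have : derivative (2 * ((n:ℝ[X]) - (i:ℝ[X])) * derivative^[i] (physHermite n))
       = 2 * ((n:ℝ[X]) - (i:ℝ[X])) * derivative^[i+1] (physHermite n) := by
      rw [Function.iterate_succ_apply']
      simp [derivative_mul]
    rw [this]
    simp only [derivative_mul, derivative_X, derivative_ofNat]
    rw [← Function.iterate_succ_apply' (⇑derivative) (i+1)]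
    simp only [Nat.succ_eq_add_one, show i + 1 + 1 = i + 2 from rfl]
    rw [ih]
    push_cast
    ring

lemma physHermite_eval_zero_succ (n : ℕ) :
    (physHermite (n+1)).eval 0 = - (derivative (physHermite n)).eval 0 := by
  rw [physHermite]; simp

lemma physHermite_eval_zero_add_two (n : ℕ) :
    (physHermite (n+2)).eval 0 = - (2 * ((n:ℝ) + 1)) * (physHermite n).eval 0 := by
  rw [physHermite_eval_zero_succ, deriv_physHermite]; simp

lemma physHermite_eval_zero (q : ℕ) :
    (physHermite (2*q)).eval 0 ≠ 0 ∧ (physHermite (2*q+1)).eval 0 = 0 := by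
  induction q with
  | zero => simp [physHermite]
  | succ q ih =>
    have h1 : 2 * (q+1) = 2*q + 2 := by ring
    have h2 : 2 * (q+1) + 1 = (2*q+1) + 2 := by ring
    rw [h2, h1, physHermite_eval_zero_add_two, physHermite_eval_zero_add_two, ih.2]
    refine ⟨mul_ne_zero (neg_ne_zero.mpr (by positivity)) ih.1, by simp⟩

lemma physHermite_eval_zero_iff (n : ℕ) : (physHermite n).eval 0 ≠ 0 ↔ Even n := by
  rcases Nat.even_or_odd' n with ⟨q, rfl | rfl⟩
  · simp [(physHermite_eval_zero q).1]
  · simp [(physHermite_eval_zero q).2]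

lemma physHermite_deriv_eval_zero_iff (n : ℕ) :
    (derivative (physHermite n)).eval 0 ≠ 0 ↔ Odd n := by
  have := physHermite_eval_zero_succ n
  have h2 := physHermite_eval_zero_iff (n+1)
  rw [this, neg_ne_zero] at h2
  rw [h2, Nat.even_add_one, Nat.not_even_iff_odd]

lemma physHermite_iter (n i : ℕ) :
    ∃ c : ℝ, c ≠ 0 ∧ derivative^[i] (physHermite (n+i)) = C c * physHermite n := by
  induction i with
  | zero => exact ⟨1, one_ne_zero, by simp⟩
  | succ i ih =>
    obtain ⟨c, hc, h⟩ := ih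
    refine ⟨(2 * ((n + i : ℕ) + 1)) * c, mul_ne_zero (by positivity) hc, ?_⟩
    rw [Function.iterate_succ_apply, ← add_assoc, deriv_physHermite]
    have : (2 * (((n+i : ℕ):ℝ[X]) + 1)) = C (2 * (((n + i : ℕ):ℝ) + 1)) := by
      rw [C_mul, C_add, C_1, C_eq_natCast]; rfl
    rw [this, iterate_derivative_C_mul, h, ← mul_assoc, ← C_mul]

lemma physHermite_comp_neg (n : ℕ) :
    (physHermite n).comp (-X) = (-1)^n * physHermite n := by
  induction n with
  | zero => simp [physHermite]
  | succ n ih =>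
    have h := congrArg derivative ih
    rw [derivative_comp] at h
    have h1 : derivative ((-1)^n * physHermite n) = (-1)^n * derivative (physHermite n) := by
      have : ((-1:ℝ[X])^n) = C ((-1)^n) := by simp
      rw [this, derivative_C_mul]
    rw [h1] at h
    simp only [derivative_neg, derivative_X] at h
    rw [physHermite]
    simp only [sub_comp, mul_comp, X_comp, ih, ofNat_comp]
    have h3 : (derivative (physHermite n)).comp (-X) = - ((-1)^n * derivative (physHermite n)) := by
      rw [← h]; ring
    rw [h3]; ring

lemma physHermite_iter_neg (n i : ℕ) (t : ℝ) :
    (derivative^[i] (physHermite n)).eval (-t)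
      = (-1)^i * ((-1)^n * (derivative^[i] (physHermite n)).eval t) := by
  have key : (derivative^[i] (physHermite n)).comp (-X)
      = (-1)^i * ((-1)^n * derivative^[i] (physHermite n)) := by
    induction i with
    | zero => simpa using physHermite_comp_neg n
    | succ i ih =>
      have h := congrArg derivative ih
      rw [derivative_comp] at h
      have h1 : derivative ((-1)^i * ((-1)^n * derivative^[i] (physHermite n)))
          = (-1)^i * ((-1)^n * derivative^[i+1] (physHermite n)) := by
        have : ∀ m, ((-1:ℝ[X])^m) = C ((-1)^m) := by simp
        rw [this, this, derivative_C_mul, derivative_C_mul, Function.iterate_succ_apply']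
      rw [h1, ← Function.iterate_succ_apply' (⇑derivative) i] at h
      simp only [derivative_neg, derivative_X] at h
      rw [pow_succ]
      have : (derivative^[i+1] (physHermite n)).comp (-X) =
        - (-1 * (derivative^[i+1] (physHermite n)).comp (-X)) := by ring
      rw [this, h]; ring
  have := congrArg (eval t) key
  simpa using this

noncomputable def hermOp : ℝ[X] →ₗ[ℝ] ℝ[X] :=
  (LinearMap.mulLeft ℝ (2 * X : ℝ[X])).comp derivative - derivative.comp derivative

lemma hermOp_apply (p : ℝ[X]) : hermOp p = 2 * X * derivative p - derivative (derivative p) := rfl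

lemma hermOp_hermite (n : ℕ) : hermOp (physHermite n) = (2 * (n:ℝ)) • physHermite n := by
  rw [hermOp_apply, physHermite_ode, smul_eq_C_mul, C_mul, C_eq_natCast,
    show (C (2:ℝ)) = (2:ℝ[X]) from rfl]
  ring

lemma aeval_hermOp_hermite (Q : ℝ[X]) (n : ℕ) :
    (aeval hermOp Q) (physHermite n) = Q.eval (2 * (n:ℝ)) • physHermite n := by
  by_cases h : physHermite n = 0
  · simp [h]
  · exact Module.End.aeval_apply_of_hasEigenvector
      ⟨Module.End.mem_eigenspace_iff.mpr (hermOp_hermite n), h⟩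

lemma hermOp_dvd (a : ℕ) (p : ℝ[X]) (h : (X:ℝ[X])^(a+2) ∣ p) : (X:ℝ[X])^a ∣ hermOp p := by
  obtain ⟨g, rfl⟩ := h
  refine ⟨2 * X * (((a:ℝ[X])+2) * X * g + X^2 * derivative g)
    - (((a:ℝ[X])+2) * ((a:ℝ[X])+1) * g + 2 * ((a:ℝ[X])+2) * X * derivative g + X^2 * derivative (derivative g)), ?_⟩
  rw [hermOp_apply]
  simp [derivative_mul]
  ring

lemma hermOp_pow_dvd (p a : ℕ) (f : ℝ[X]) (h : (X:ℝ[X])^(a+2*p) ∣ f) :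
    (X:ℝ[X])^a ∣ (hermOp^p) f := by
  induction p generalizing a with
  | zero => simpa using h
  | succ p ih =>
    rw [pow_succ', Module.End.mul_apply]
    exact hermOp_dvd _ _ (ih (a+2) (by convert h using 2; ring))

lemma aeval_hermOp_dvd (s : ℕ) (Q f : ℝ[X]) (hQ : Q.natDegree < s) (h : (X:ℝ[X])^(2*s) ∣ f) :
    (X:ℝ[X])^2 ∣ (aeval hermOp Q) f := by
  rw [aeval_eq_sum_range, LinearMap.sum_apply]
  refine Finset.dvd_sum fun i hi => ?_
  rw [LinearMap.smul_apply]
  rw [smul_eq_C_mul]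
  refine Dvd.dvd.mul_left ?_ _
  apply hermOp_pow_dvd
  refine dvd_trans (pow_dvd_pow _ ?_) h
  simp at hi; omega

/-- abstract Vandermonde-type step -/
lemma herm_vand {ι : Type*} [Fintype ι] [DecidableEq ι] (nn : ι → ℕ) (hinj : Function.Injective nn) (w : ι → ℝ)
    (s : ℕ) (hdvd : (X:ℝ[X])^(2*s) ∣ ∑ j, w j • physHermite (nn j))
    (φ : ℝ[X] →ₗ[ℝ] ℝ) (hφ : ∀ f, (X:ℝ[X])^2 ∣ f → φ f = 0)
    (S : Finset ι) (hS : S.card ≤ s) (hS' : ∀ j, φ (physHermite (nn j)) ≠ 0 ↔ j ∈ S) :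
    ∀ j ∈ S, w j = 0 := by
  intro j hj
  set Q : ℝ[X] := ∏ i ∈ S.erase j, (X - C (2 * (nn i : ℝ))) with hQ
  have hdeg : Q.natDegree < s := by
    rw [hQ, natDegree_prod_of_monic _ _ (fun i _ => monic_X_sub_C _)]
    simp only [natDegree_X_sub_C, Finset.sum_const, smul_eq_mul, mul_one]
    have := Finset.card_erase_lt_of_mem hj
    omega
  have h1 := hφ _ (aeval_hermOp_dvd s Q _ hdeg hdvd)
  rw [map_sum, map_sum] at h1
  simp only [map_smul, aeval_hermOp_hermite, smul_eq_mul] at h1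
  rw [Finset.sum_eq_single j] at h1
  · have hne := (hS' j).mpr hj
    have hQj : Q.eval (2 * (nn j:ℝ)) ≠ 0 := by
      rw [hQ, eval_prod, Finset.prod_ne_zero_iff]
      intro i hi
      simp only [eval_sub, eval_X, eval_C]
      intro h
      have : nn j = nn i := by
        have : (nn j : ℝ) = nn i := by linarith
        exact_mod_cast this
      exact (Finset.ne_of_mem_erase hi) (hinj this.symm)
    rcases mul_eq_zero.mp h1 with h | h
    · exact h
    · rcases mul_eq_zero.mp h with h | h <;> contradiction
  · intro i _ hij
    by_cases hiS : i ∈ S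
    · have : Q.eval (2 * (nn i:ℝ)) = 0 := by
        rw [hQ, eval_prod]
        exact Finset.prod_eq_zero (Finset.mem_erase.mpr ⟨hij, hiS⟩) (by simp)
      simp [this]
    · have : φ (physHermite (nn i)) = 0 := by
        by_contra h; exact hiS ((hS' i).mp h)
      simp [this]
  · simp

lemma genHermite_eval_zero (r : ℕ) (lam : Fin r → ℕ) (h : IsEvenPartition r lam) :
    (genHermite r lam).eval 0 ≠ 0 := by
  obtain ⟨⟨hdec, hpos⟩, ⟨s, hs⟩, hpair⟩ := h
  set nn : Fin r → ℕ := fun j => lam (Fin.rev j) + j with hnn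
  have hmono : StrictMono nn := by
    intro i j hij
    have := hdec (Fin.rev j) (Fin.rev i) (Fin.rev_le_rev.mpr hij.le)
    have h2 : (i:ℕ) < j := hij
    simp only [hnn]; omega
  have hpair' : ∀ i j : Fin r, (i:ℕ) / 2 = (j:ℕ)/2 → i < j → nn j = nn i + 1 := by
    intro i j hij hlt
    have hlt' : (i:ℕ) < j := hlt
    have hi := i.2
    have hj := j.2
    have := hpair (s - 1 - (i:ℕ)/2) (by omega)
    have e1 : Fin.rev j = ⟨2 * (s - 1 - (i:ℕ)/2), by omega⟩ := by
      ext; simp [Fin.val_rev]; omega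
    have e2 : Fin.rev i = ⟨2 * (s - 1 - (i:ℕ)/2)+1, by omega⟩ := by
      ext; simp [Fin.val_rev]; omega
    simp only [hnn]
    rw [e1, e2, this]; omega
  have hcard : ∀ b : ℕ, (Finset.univ.filter fun j : Fin r => nn j % 2 = b).card ≤ s := by
    intro b
    have : (Finset.range s).card = s := Finset.card_range s
    rw [← this]
    refine Finset.card_le_card_of_injOn (fun j => (j:ℕ)/2) ?_ ?_
    · intro j _
      have := j.2
      simp; omega
    · intro i hi j hj hij
      simp at hi hj hij
      by_contra hne
      rcases lt_or_gt_of_ne hne with h | h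
      · have := hpair' i j hij h; omega
      · have := hpair' j i hij.symm h; omega
  intro hdet
  have hdet' : (Matrix.of fun i j : Fin r =>
      (derivative^[(i:ℕ)] (physHermite (nn j))).eval 0).det = 0 := by
    rw [genHermite, Wron, ← coe_evalRingHom, RingHom.map_det] at hdet
    exact hdet
  obtain ⟨w, hw0, hw⟩ := Matrix.exists_mulVec_eq_zero_iff.mpr hdet'
  have hdvd : (X:ℝ[X])^(2*s) ∣ ∑ j, w j • physHermite (nn j) := by
    rw [X_pow_dvd_iff]
    intro d hd
    have h1 := congrFun hw ⟨d, by omega⟩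
    simp only [Matrix.mulVec, dotProduct, Matrix.of_apply, Pi.zero_apply] at h1
    have h2 : (derivative^[d] (∑ j, w j • physHermite (nn j))).eval 0 = 0 := by
      rw [iterate_derivative_sum, eval_finsetSum]
      refine Eq.trans (Finset.sum_congr rfl fun j _ => ?_) h1
      rw [iterate_derivative_smul, eval_smul, smul_eq_mul, mul_comm]
    rw [← coeff_zero_eq_eval_zero, coeff_iterate_derivative] at h2
    simp only [zero_add, nsmul_eq_mul] at h2
    rcases mul_eq_zero.mp h2 with h3 | h3
    · exfalso
      rw [Nat.descFactorial_self] at h3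
      exact Nat.factorial_ne_zero d (by exact_mod_cast h3)
    · exact h3
  apply hw0
  funext j
  rcases Nat.even_or_odd (nn j) with he | ho
  · refine herm_vand nn hmono.injective w s hdvd (leval 0) ?_ _ (hcard 0) ?_ j
      (by simp; exact Nat.even_iff.mp he)
    · rintro f ⟨g, rfl⟩; simp [leval]
    · intro i
      simp only [leval, LinearMap.coe_mk, AddHom.coe_mk, Finset.mem_filter, Finset.mem_univ, true_and]
      rw [physHermite_eval_zero_iff, Nat.even_iff]
  · refine herm_vand nn hmono.injective w s hdvd ((leval 0).comp derivative) ?_ _ (hcard 1) ?_ j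
      (by simp; exact Nat.odd_iff.mp ho)
    · rintro f ⟨g, rfl⟩; simp [leval]
    · intro i
      simp only [LinearMap.comp_apply, leval, LinearMap.coe_mk, AddHom.coe_mk, Finset.mem_filter, Finset.mem_univ, true_and]
      rw [physHermite_deriv_eval_zero_iff, Nat.odd_iff]

lemma XHermite_expand (r : ℕ) (lam : Fin r → ℕ) :
    ∃ c : Fin (r+1) → ℝ[X], c (Fin.last r) = genHermite r lam ∧
      ∀ m, XHermite r lam m
        = ∑ i : Fin (r+1), c i * derivative^[(i:ℕ)] (physHermite (m + r - ∑ i, lam i)) := by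
  let A : Matrix (Fin (r+1)) (Fin r) ℝ[X] :=
    Matrix.of fun i j => derivative^[(i:ℕ)] (physHermite (lam (Fin.rev j) + j))
  refine ⟨fun i => (-1)^((i:ℕ) + r) * (A.submatrix i.succAbove id).det, ?_, ?_⟩
  · simp only [Fin.val_last, Fin.succAbove_last]
    rw [← two_mul, pow_mul]
    simp only [even_two, Even.neg_pow, one_pow, one_mul]
    rfl
  · intro m
    rw [XHermite, Wron, Matrix.det_succ_column _ (Fin.last r)]
    refine Finset.sum_congr rfl fun i _ => ?_
    have : ((Matrix.of fun i j : Fin (r+1) => (fun p => derivative p)^[(i : ℕ)]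
       (if h : (j : ℕ) < r then physHermite (lam (Fin.rev ⟨(j : ℕ), h⟩) + j)
        else physHermite (m + r - ∑ i, lam i))).submatrix i.succAbove (Fin.last r).succAbove)
        = A.submatrix i.succAbove id := by
      ext1 a b
      simp [A]
    rw [this]
    simp only [Matrix.of_apply, Fin.val_last, lt_irrefl, dite_false]
    have e : (fun p : ℝ[X] => derivative p) = ⇑derivative := rfl
    rw [e]
    ring

lemma XHermite_neg (r : ℕ) (lam : Fin r → ℕ) (m : ℕ) (t : ℝ)
    (h : (XHermite r lam m).eval t = 0) : (XHermite r lam m).eval (-t) = 0 := by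
  let nn : Fin (r+1) → ℕ := fun j => if h : (j:ℕ) < r then lam (Fin.rev ⟨(j : ℕ), h⟩) + j
    else m + r - ∑ i, lam i
  have key : ∀ t, (XHermite r lam m).eval t = (Matrix.of fun i j : Fin (r+1) =>
      (derivative^[(i:ℕ)] (physHermite (nn j))).eval t).det := by
    intro t
    rw [XHermite, Wron, ← coe_evalRingHom, RingHom.map_det]
    congr 1
    ext i j
    simp only [RingHom.mapMatrix_apply, Matrix.map_apply, Matrix.of_apply, nn]
    split_ifs <;> rfl
  rw [key] at h ⊢
  simp only [physHermite_iter_neg]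
  have := Matrix.det_mul_column (fun i : Fin (r+1) => (-1:ℝ)^(i:ℕ)) (Matrix.of fun i j : Fin (r+1) =>
      (-1:ℝ)^(nn j) * (derivative^[(i:ℕ)] (physHermite (nn j))).eval t)
  have h2 := Matrix.det_mul_row (fun j : Fin (r+1) => (-1:ℝ)^(nn j)) (Matrix.of fun i j : Fin (r+1) =>
      (derivative^[(i:ℕ)] (physHermite (nn j))).eval t)
  simp only [Matrix.of_apply] at this h2
  rw [this, h2, h]; simp

lemma even_sum_lam (r : ℕ) (lam : Fin r → ℕ) (h : IsEvenPartition r lam) :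
    Even (∑ i, lam i) := by
  obtain ⟨-, ⟨s, hs⟩, hpair⟩ := h
  have key : ∑ i, ((lam i : ℕ) : ZMod 2) = 0 := by
    refine Finset.sum_involution
      (fun i _ => if hi : (i:ℕ) % 2 = 0 then ⟨i+1, by omega⟩ else ⟨i-1, by omega⟩) ?_ ?_ ?_ ?_
    · intro i _
      have : ∀ a : ZMod 2, a + a = 0 := by decide
      split_ifs with hi
      · have := hpair ((i:ℕ)/2) (by omega)
        have e1 : i = ⟨2 * ((i:ℕ)/2), by omega⟩ := by ext; simp; omega
        have e2 : (⟨(i:ℕ)+1, by omega⟩ : Fin r) = ⟨2 * ((i:ℕ)/2)+1, by omega⟩ := by ext; simp; omega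
        rw [e2, ← this, ← e1]; apply_assumption
      · have := hpair ((i:ℕ)/2) (by omega)
        have e1 : i = ⟨2 * ((i:ℕ)/2) + 1, by omega⟩ := by ext; simp; omega
        have e2 : (⟨(i:ℕ)-1, by omega⟩ : Fin r) = ⟨2 * ((i:ℕ)/2), by omega⟩ := by ext; simp; omega
        rw [e2, this, ← e1]; apply_assumption
    · intro i _ _
      split_ifs with hi <;> (intro h; have := congrArg Fin.val h; simp at this; try omega)
    · intro i _; simp
    · intro i _
      by_cases hi : (i:ℕ) % 2 = 0
      · have h' : ¬ (((i:ℕ)+1) % 2 = 0) := by omega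
        simp [hi, h']
      · have h' : ((i:ℕ)-1) % 2 = 0 := by omega
        ext
        simp [hi, h']
        omega
  rw [even_iff_two_dvd, ← ZMod.natCast_eq_zero_iff]
  push_cast; exact key

lemma ode_est (κ R : ℝ) (hκ : 1 ≤ κ) (u v : ℝ → ℝ)
    (hu : ∀ s, HasDerivAt u (v s) s) (hv : ∀ s, HasDerivAt v (s/κ * v s - u s) s)
    (hu0 : u 0 = 0) (hv0 : v 0 = 1) (s : ℝ) (hs : s ∈ Set.Icc 0 R) :
    |u s - Real.sin s| ≤ 2 * R^2 * Real.exp (R^2) / κ ∧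
    |v s - Real.cos s| ≤ 2 * R^2 * Real.exp (R^2) / κ := by
  have hκ0 : 0 < κ := by linarith
  have hR : 0 ≤ R := hs.1.trans hs.2
  -- energy
  have hE : ∀ s, HasDerivAt (fun s => (u s^2 + v s^2) * Real.exp (-(s^2/κ)))
      (-(2 * s / κ) * u s^2 * Real.exp (-(s^2/κ))) s := by
    intro s
    have h1 := (((hu s).pow 2).add ((hv s).pow 2)).mul
      ((((hasDerivAt_pow 2 s).div_const κ).neg).exp)
    refine h1.congr_deriv ?_
    simp only [Pi.add_apply, Pi.pow_apply, Pi.neg_apply]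
    field_simp
    push_cast
    ring
  have hanti : AntitoneOn (fun s => (u s^2 + v s^2) * Real.exp (-(s^2/κ))) (Set.Ici 0) := by
    refine antitoneOn_of_deriv_nonpos (convex_Ici 0)
      (fun s _ => (hE s).continuousAt.continuousWithinAt)
      (fun s _ => (hE s).differentiableAt.differentiableWithinAt) ?_
    intro s hs
    rw [interior_Ici] at hs
    rw [(hE s).deriv]
    have hs' : 0 < s := hs
    have : 0 ≤ 2 * s / κ * u s ^2 * Real.exp (-(s^2/κ)) := by positivity
    linarith
  have hvb : ∀ s ∈ Set.Icc 0 R, |v s| ≤ Real.exp (R^2) := by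
    intro s hs
    have h1 := hanti (Set.mem_Ici.mpr le_rfl) (Set.mem_Ici.mpr hs.1) hs.1
    simp only [hu0, hv0] at h1
    norm_num at h1
    have h3 : s^2/κ ≤ R^2 := by
      have : s^2 ≤ R^2 := by have := hs.1; have := hs.2; gcongr
      calc s^2/κ ≤ s^2 := div_le_self (by positivity) hκ
        _ ≤ R^2 := this
    have h2 : u s^2 + v s^2 ≤ Real.exp (R^2) := by
      have : u s ^2 + v s^2 = (u s^2 + v s^2) * Real.exp (-(s^2/κ)) * Real.exp (s^2/κ) := by
        rw [mul_assoc, ← Real.exp_add]; simp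
      rw [this]
      calc _ ≤ 1 * Real.exp (s^2/κ) := by gcongr
        _ ≤ _ := by rw [one_mul]; gcongr
    have h4 : 1 ≤ Real.exp (R^2) := Real.one_le_exp (by positivity)
    apply abs_le_of_sq_le_sq _ (by positivity)
    nlinarith [sq_nonneg (u s)]
  have hA : ∀ s, HasDerivAt (fun s => u s * Real.cos s - v s * Real.sin s)
      (-(s/κ * v s * Real.sin s)) s := by
    intro s
    have h1 := ((hu s).mul (Real.hasDerivAt_cos s)).sub ((hv s).mul (Real.hasDerivAt_sin s))
    refine h1.congr_deriv ?_
    ring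
  have hB : ∀ s, HasDerivAt (fun s => u s * Real.sin s + v s * Real.cos s)
      (s/κ * v s * Real.cos s) s := by
    intro s
    have h1 := ((hu s).mul (Real.hasDerivAt_sin s)).add ((hv s).mul (Real.hasDerivAt_cos s))
    refine h1.congr_deriv ?_
    ring
  have hsv : ∀ s ∈ Set.Icc 0 R, ∀ c : ℝ, |c| ≤ 1 → |s/κ * v s * c| ≤ R * Real.exp (R^2) / κ := by
    intro s hs c hc
    rw [abs_mul, abs_mul, abs_div, abs_of_nonneg hs.1, abs_of_pos hκ0]
    calc s/κ * |v s| * |c| ≤ R/κ * Real.exp (R^2) * 1 := by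
          have := hvb s hs; have := hs.2; gcongr
      _ = _ := by ring
  have h0 : (0:ℝ) ∈ Set.Icc 0 R := ⟨le_rfl, hR⟩
  have hA' := (convex_Icc 0 R).norm_image_sub_le_of_norm_hasDerivWithin_le
    (fun x _ => (hA x).hasDerivWithinAt)
    (fun x hx => by
      rw [Real.norm_eq_abs, abs_neg]; exact hsv x hx _ (Real.abs_sin_le_one x)) h0 hs
  have hB' := (convex_Icc 0 R).norm_image_sub_le_of_norm_hasDerivWithin_le
    (fun x _ => (hB x).hasDerivWithinAt)
    (fun x hx => by
      rw [Real.norm_eq_abs]; exact hsv x hx _ (Real.abs_cos_le_one x)) h0 hs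
  simp only [hu0, hv0, Real.norm_eq_abs, Real.sin_zero, Real.cos_zero, sub_zero, mul_zero, zero_mul,
    mul_one, zero_add, abs_of_nonneg hs.1] at hA' hB'
  have hb : R * Real.exp (R^2) / κ * s ≤ R^2 * Real.exp (R^2) / κ := by
    have : R * Real.exp (R^2) / κ * s ≤ R * Real.exp (R^2) / κ * R := by
      have := hs.2; gcongr
    calc _ ≤ _ := this
      _ = _ := by ring
  have hA2 := hA'.trans hb
  have hB2 := hB'.trans hb
  set a := u s * Real.cos s - v s * Real.sin s
  set b := u s * Real.sin s + v s * Real.cos s - 1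
  have hsc := Real.sin_sq_add_cos_sq s
  have e1 : u s - Real.sin s = a * Real.cos s + b * Real.sin s := by
    simp only [a, b]
    linear_combination (- u s) * hsc
  have e2 : v s - Real.cos s = b * Real.cos s - a * Real.sin s := by
    simp only [a, b]
    linear_combination (- v s) * hsc
  have hac : ∀ a c : ℝ, |c| ≤ 1 → |a * c| ≤ |a| := by
    intro a c hc
    rw [abs_mul]; exact mul_le_of_le_one_right (abs_nonneg _) hc
  have tot : 2 * R^2 * Real.exp (R^2) / κ = R^2 * Real.exp (R^2) / κ + R^2 * Real.exp (R^2) / κ := by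
    ring
  rw [tot, e1, e2]
  constructor
  · refine (abs_add_le _ _).trans (add_le_add ?_ ?_)
    · exact (hac _ _ (Real.abs_cos_le_one s)).trans hA2
    · exact (hac _ _ (Real.abs_sin_le_one s)).trans hB2
  · refine (abs_sub _ _).trans (add_le_add ?_ ?_)
    · exact (hac _ _ (Real.abs_cos_le_one s)).trans hB2
    · exact (hac _ _ (Real.abs_sin_le_one s)).trans hA2

lemma abs_sin_nat_pi (k : ℕ) (x : ℝ) : |Real.sin (x + k * Real.pi)| = |Real.sin x| := by
  rw [Real.sin_add_nat_mul_pi, abs_mul]; simp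

lemma abs_cos_nat_pi (k : ℕ) (x : ℝ) : |Real.cos (x + k * Real.pi)| = |Real.cos x| := by
  rw [Real.cos_add_nat_mul_pi, abs_mul]; simp

lemma zeros_step (F F' : ℕ → ℝ → ℝ) (c : ℝ) (hc : c ≠ 0)
    (hF : ∀ᶠ n in Filter.atTop, ∀ s, HasDerivAt (F n) (F' n s) s)
    (h1 : ∀ R, TendstoUniformlyOn F (fun s => c * Real.sin s) Filter.atTop (Set.Icc 0 R))
    (h2 : ∀ R, TendstoUniformlyOn F' (fun s => c * Real.cos s) Filter.atTop (Set.Icc 0 R))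
    (K : ℕ → ℕ) (hK : Filter.Tendsto K Filter.atTop Filter.atTop)
    (y : ℕ → ℕ → ℝ)
    (hy : ∀ᶠ n in Filter.atTop, StrictMonoOn (y n) (Set.Icc 1 (2 * K n + 1)) ∧
      ∀ t, F n t = 0 ↔ ∃ j, 1 ≤ j ∧ j ≤ 2 * K n + 1 ∧ y n j = t)
    (h0 : ∀ᶠ n in Filter.atTop, y n (K n + 1) = 0) (k : ℕ) :
    Filter.Tendsto (fun n => y n (K n + 1 + k)) Filter.atTop (nhds (k * Real.pi)) := by
  induction k with
  | zero =>
    simp only [Nat.cast_zero, zero_mul, add_zero]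
    exact tendsto_const_nhds.congr' (h0.mono fun n hn => hn.symm)
  | succ k ih =>
    rw [Metric.tendsto_nhds] at ih ⊢
    intro ε' hε'
    obtain ⟨ε, hε, hε1, hεε⟩ : ∃ ε : ℝ, 0 < ε ∧ ε ≤ 1 ∧ ε < ε' :=
      ⟨min 1 (ε'/2), by positivity, min_le_left _ _, (min_le_right _ _).trans_lt (by linarith)⟩
    have hpi := Real.pi_gt_three
    have hsin : 0 < Real.sin ε := Real.sin_pos_of_pos_of_lt_pi hε (by linarith)
    have hcos : 0 < Real.cos ε := Real.cos_pos_of_mem_Ioo ⟨by linarith, by linarith⟩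
    have hca : 0 < |c| := abs_pos.mpr hc
    set R := ((k:ℝ) + 2) * Real.pi with hR
    have H1 := Metric.tendstoUniformlyOn_iff.mp (h1 R) (|c| * Real.sin ε) (by positivity)
    have H2 := Metric.tendstoUniformlyOn_iff.mp (h2 R) (|c| * Real.cos ε) (by positivity)
    have hkpi : 0 ≤ (k:ℝ) * Real.pi := by positivity
    filter_upwards [hF, H1, H2, hy, h0, ih ε hε, hK.eventually_ge_atTop (k+1)]
      with n hF H1 H2 hy h0 ih hKn
    obtain ⟨hmono, hz⟩ := hy
    have hcont : Continuous (F n) := continuous_iff_continuousAt.mpr fun s => (hF s).continuousAt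
    simp only [Real.dist_eq] at H1 H2 ih ⊢
    set a := y n (K n + 1 + k) with ha
    have hidx : K n + 1 + (k+1) = K n + 1 + k + 1 := by ring
    set b := y n (K n + 1 + (k+1)) with hb
    have hab : a < b := hmono ⟨by omega, by omega⟩ ⟨by omega, by omega⟩ (by omega)
    have ha0 : 0 ≤ a := by
      rw [← h0]
      exact hmono.monotoneOn ⟨by omega, by omega⟩ ⟨by omega, by omega⟩ (by omega)
    have hFa : F n a = 0 := (hz a).mpr ⟨_, by omega, by omega, rfl⟩
    have hFb : F n b = 0 := (hz b).mpr ⟨_, by omega, by omega, rfl⟩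
    rw [abs_lt] at ih
    push_cast
    -- upper bound
    have hub : b ≤ ((k:ℝ) + 1) * Real.pi + ε := by
      have p1 : ((k:ℝ) + 1) * Real.pi - ε = -ε + ((k+1 : ℕ):ℝ) * Real.pi := by push_cast; ring
      have p2 : ((k:ℝ) + 1) * Real.pi + ε = ε + ((k+1 : ℕ):ℝ) * Real.pi := by push_cast; ring
      have q1 := H1 (((k:ℝ) + 1) * Real.pi - ε) ⟨by nlinarith, by rw [hR]; nlinarith⟩
      have q2 := H1 (((k:ℝ) + 1) * Real.pi + ε) ⟨by nlinarith, by rw [hR]; nlinarith⟩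
      have z : (0:ℝ) ∈ Set.uIcc (F n (((k:ℝ) + 1) * Real.pi - ε)) (F n (((k:ℝ) + 1) * Real.pi + ε)) := by
        have s1 : Real.sin (((k:ℝ) + 1) * Real.pi - ε) = (-1)^(k+1) * (- Real.sin ε) := by
          rw [p1, Real.sin_add_nat_mul_pi, Real.sin_neg]
        have s2 : Real.sin (((k:ℝ) + 1) * Real.pi + ε) = (-1)^(k+1) * (Real.sin ε) := by
          rw [p2, Real.sin_add_nat_mul_pi]
        rw [s1] at q1
        rw [s2] at q2
        have hcc : |c| = |c * (-1)^(k+1)| := by rw [abs_mul]; simp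
        rw [hcc, ← mul_assoc] at q1 q2
        set d := c * (-1)^(k+1)
        rw [Set.mem_uIcc]
        rw [abs_lt] at q1 q2
        rcases abs_cases d with ⟨hd, _⟩ | ⟨hd, _⟩
        · rw [hd] at q1 q2
          left; constructor <;> linarith
        · rw [hd] at q1 q2
          right; constructor <;> linarith
      obtain ⟨t, ht, ht0⟩ := intermediate_value_uIcc (hcont.continuousOn) z
      rw [Set.uIcc_of_le (by linarith)] at ht
      obtain ⟨j, hj1, hj2, hjt⟩ := (hz t).mp ht0
      have hat : a < t := by
        have := ht.1
        nlinarith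
      have hj : K n + 1 + k < j := by
        by_contra hcon
        push Not at hcon
        have := hmono.monotoneOn ⟨hj1, hj2⟩ (⟨by omega, by omega⟩ : K n + 1 + k ∈ Set.Icc 1 (2 * K n + 1)) hcon
        linarith
      have : b ≤ t := by
        rw [← hjt]
        exact hmono.monotoneOn ⟨by omega, by omega⟩ ⟨hj1, hj2⟩ (by omega)
      exact this.trans ht.2
    have hbR : b ≤ R := by rw [hR]; nlinarith
    have hlb : ((k:ℝ) + 1) * Real.pi - ε < b := by
      by_contra hcon
      push Not at hcon
      by_cases hb1 : b ≤ k * Real.pi + ε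
      · obtain ⟨t, ht, ht0⟩ := exists_hasDerivAt_eq_zero hab hcont.continuousOn (hFa.trans hFb.symm)
          (fun x _ => hF x)
        have q := H2 t ⟨by linarith [ht.1], by linarith [ht.2]⟩
        rw [ht0, sub_zero, abs_mul] at q
        have q2 : |Real.cos t| < Real.cos ε := lt_of_mul_lt_mul_left q hca.le
        have e : t = (t - k * Real.pi) + k * Real.pi := by ring
        rw [e, abs_cos_nat_pi] at q2
        have q3 := (le_abs_self _).trans_lt q2
        rw [← Real.cos_abs (t - _)] at q3
        have : |t - k * Real.pi| ≤ ε := by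
          rw [abs_le]; constructor <;> linarith [ht.1, ht.2]
        have := Real.cos_le_cos_of_nonneg_of_le_pi (abs_nonneg (t - k * Real.pi)) (by linarith) this
        linarith
      · push Not at hb1
        have q := H1 b ⟨by linarith, hbR⟩
        rw [hFb, sub_zero, abs_mul] at q
        have q2 : |Real.sin b| < Real.sin ε := lt_of_mul_lt_mul_left q hca.le
        have e : b = (b - k * Real.pi) + k * Real.pi := by ring
        rw [e, abs_sin_nat_pi] at q2
        have q3 := (le_abs_self _).trans_lt q2
        set d := b - k * Real.pi with hd
        have hd1 : ε < d := by linarith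
        have hd2 : d ≤ Real.pi - ε := by linarith
        rcases le_total d (Real.pi/2) with h | h
        · have := Real.sin_le_sin_of_le_of_le_pi_div_two (by linarith) h hd1.le
          linarith
        · have := Real.sin_le_sin_of_le_of_le_pi_div_two (x := ε) (y := Real.pi - d) (by linarith) (by linarith) (by linarith)
          rw [Real.sin_pi_sub] at this
          linarith
    rw [abs_lt]
    constructor <;> linarith

lemma enum_symm (K : ℕ) (y : ℕ → ℝ) (hm : StrictMonoOn y (Set.Icc 1 (2*K+1)))
    (Z : ℝ → Prop) (hZ : ∀ t, Z t ↔ ∃ j, 1 ≤ j ∧ j ≤ 2 * K + 1 ∧ y j = t)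
    (hs : ∀ t, Z t → Z (-t)) (j : ℕ) (hj : j ∈ Set.Icc 1 (2*K+1)) :
    y (2*K+2-j) = - y j := by
  let f : Fin (2*K+1) → ℝ := fun i => y (i+1)
  let g : Fin (2*K+1) → ℝ := fun i => - y (2*K+1-i)
  have hf : StrictMono f := by
    intro a b hab
    have h : (a:ℕ) < b := hab
    exact hm ⟨by omega, by omega⟩ ⟨by omega, by omega⟩ (by omega)
  have hg : StrictMono g := by
    intro a b hab
    have h : (a:ℕ) < b := hab
    exact neg_lt_neg (hm ⟨by omega, by omega⟩ ⟨by omega, by omega⟩ (by omega))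
  have e1 : Set.range f = {t | Z t} := by
    ext t
    simp only [Set.mem_range, Set.mem_ofPred_eq, hZ]
    constructor
    · rintro ⟨i, rfl⟩; exact ⟨i+1, by omega, by omega, rfl⟩
    · rintro ⟨j, h1, h2, rfl⟩
      exact ⟨⟨j-1, by omega⟩, by simp only [f]; congr 1; omega⟩
  have e2 : Set.range g = {t | Z t} := by
    ext t
    simp only [Set.mem_range, Set.mem_ofPred_eq]
    constructor
    · rintro ⟨i, rfl⟩
      exact hs _ ((hZ _).mpr ⟨2*K+1-i, by omega, by omega, rfl⟩)
    · intro h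
      obtain ⟨j, h1, h2, h3⟩ := (hZ _).mp (hs _ h)
      refine ⟨⟨2*K+1-j, by omega⟩, ?_⟩
      simp only [g]
      have : 2*K+1-(2*K+1-j) = j := by omega
      rw [this, h3, neg_neg]
  have := (hf.range_inj hg).mp (e1.trans e2.symm)
  have h := congrFun this ⟨j-1, by have := hj.2; have := hj.1; omega⟩
  simp only [f, g] at h
  have a1 : j - 1 + 1 = j := by have := hj.1; omega
  have a2 : 2*K+1-(j-1) = 2*K+2-j := by have := hj.1; have := hj.2; omega
  rw [a1, a2] at h
  rw [h, neg_neg]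

noncomputable def hW (r N : ℕ) : ℝ := Real.sqrt (2 * ((N:ℝ) - r))

noncomputable def hD (r N : ℕ) : ℝ :=
  (derivative^[r+1] (physHermite N)).eval 0 / hW r N

noncomputable def hG (r : ℕ) (N : ℕ → ℕ) (i : ℕ) (p : ℕ × ℝ) : ℝ :=
  (derivative^[i] (physHermite (N p.1))).eval (p.2 / hW r (N p.1)) / hD r (N p.1)

lemma hW_sq (r N : ℕ) (h : r ≤ N) : hW r N ^ 2 = 2 * ((N:ℝ) - r) := by
  have : (r:ℝ) ≤ N := by exact_mod_cast h
  exact Real.sq_sqrt (by linarith)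

lemma hW_pos (r N : ℕ) (h : r < N) : 0 < hW r N := by
  have : (r:ℝ) < N := by exact_mod_cast h
  exact Real.sqrt_pos.mpr (by linarith)

lemma hD_ne (r N : ℕ) (h : r < N) (ho : Odd (N - r)) : hD r N ≠ 0 := by
  refine div_ne_zero ?_ (hW_pos r N h).ne'
  obtain ⟨c, hc, e⟩ := physHermite_iter (N - (r+1)) (r+1)
  rw [Nat.sub_add_cancel (by omega)] at e
  rw [e, eval_mul, eval_C]
  refine mul_ne_zero hc ?_
  rw [physHermite_eval_zero_iff]
  rw [Nat.odd_iff] at ho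
  rw [Nat.even_iff]; omega

lemma herm_r_zero (r N : ℕ) (h : r < N) (ho : Odd (N - r)) :
    (derivative^[r] (physHermite N)).eval 0 = 0 := by
  obtain ⟨c, hc, e⟩ := physHermite_iter (N - r) r
  rw [Nat.sub_add_cancel (by omega)] at e
  rw [e, eval_mul]
  have : ¬ (physHermite (N-r)).eval 0 ≠ 0 := by
    rw [physHermite_eval_zero_iff, Nat.not_even_iff_odd]; exact ho
  push Not at this
  rw [this, mul_zero]

lemma hasDerivAt_scaled (p : ℝ[X]) (w d s : ℝ) :
    HasDerivAt (fun s => p.eval (s/w) / d) ((derivative p).eval (s/w) / (d * w)) s := by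
  have h1 : HasDerivAt (fun s : ℝ => s / w) (1 / w) s := (hasDerivAt_id s).div_const w
  have h2 := ((p.hasDerivAt (s/w)).comp s h1).div_const d
  refine h2.congr_deriv ?_
  rw [mul_one_div, div_div, mul_comm w d]

lemma herm_bound (r N : ℕ) (h : r < N) (ho : Odd (N - r)) (R s : ℝ) (hs : s ∈ Set.Icc 0 R) :
    |(derivative^[r] (physHermite N)).eval (s / hW r N) / hD r N - Real.sin s|
      ≤ 2 * R^2 * Real.exp (R^2) / ((N:ℝ) - r) ∧
    |(derivative^[r+1] (physHermite N)).eval (s / hW r N) / hD r N / hW r N - Real.cos s|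
      ≤ 2 * R^2 * Real.exp (R^2) / ((N:ℝ) - r) := by
  have hw := hW_pos r N h
  have hd := hD_ne r N h ho
  have hw2 := hW_sq r N h.le
  have hk : (1:ℝ) ≤ (N:ℝ) - r := by
    have : (r:ℝ) + 1 ≤ N := by exact_mod_cast h
    linarith
  have hk0 : (0:ℝ) < (N:ℝ) - r := by linarith
  refine ode_est ((N:ℝ) - r) R hk
    (fun s => (derivative^[r] (physHermite N)).eval (s / hW r N) / hD r N)
    (fun s => (derivative^[r+1] (physHermite N)).eval (s / hW r N) / hD r N / hW r N)
    ?_ ?_ ?_ ?_ s hs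
  · intro s
    refine (hasDerivAt_scaled _ _ _ _).congr_deriv ?_
    rw [← Function.iterate_succ_apply' (⇑derivative) r, div_div]
  · intro s
    refine ((hasDerivAt_scaled (derivative^[r+1] (physHermite N)) (hW r N) (hD r N) s).div_const
      (hW r N)).congr_deriv ?_
    rw [← Function.iterate_succ_apply' (⇑derivative) (r+1)]
    simp only [Nat.succ_eq_add_one, show r + 1 + 1 = r + 2 from rfl]
    rw [physHermite_ode_iter]
    simp only [eval_sub, eval_mul, eval_X, eval_natCast, eval_ofNat]
    rw [show (N:ℝ) - r = hW r N ^2 / 2 by linarith]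
    field_simp
  · simp [herm_r_zero r N h ho]
  · simp only [zero_div]
    rw [hD]
    have h1 : (derivative^[r+1] (physHermite N)).eval 0 ≠ 0 := by
      intro h0; apply hd; rw [hD, h0, zero_div]
    field_simp

section Asymp
open Filter Asymptotics Topology

lemma herm_asymp (r : ℕ) (N : ℕ → ℕ) (hN : Tendsto N atTop atTop)
    (ho : ∀ᶠ n in atTop, Odd (N n - r)) (R : ℝ) :
    Tendsto (fun p : ℕ × ℝ => p.2 / hW r (N p.1)) (atTop ×ˢ 𝓟 (Set.Icc 0 R)) (𝓝 0) ∧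
    Tendsto (fun p : ℕ × ℝ => (hW r (N p.1))⁻¹) (atTop ×ˢ 𝓟 (Set.Icc 0 R)) (𝓝 0) ∧
    Tendsto (fun p => hG r N r p - Real.sin p.2) (atTop ×ˢ 𝓟 (Set.Icc 0 R)) (𝓝 0) ∧
    Tendsto (fun p => hG r N (r+1) p / hW r (N p.1) - Real.cos p.2)
      (atTop ×ˢ 𝓟 (Set.Icc 0 R)) (𝓝 0) ∧
    (∀ i ≤ r, (hG r N i) =O[atTop ×ˢ 𝓟 (Set.Icc 0 R)] (fun _ => (1:ℝ))) ∧
    (∀ i < r, Tendsto (hG r N i) (atTop ×ˢ 𝓟 (Set.Icc 0 R)) (𝓝 0)) := by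
  have hNr : ∀ᶠ n in atTop, r < N n := hN.eventually_gt_atTop r
  have hkap : Tendsto (fun n => (N n : ℝ) - r) atTop atTop :=
    tendsto_atTop_add_const_right _ _ (tendsto_natCast_atTop_atTop.comp hN)
  have hw : Tendsto (fun n => hW r (N n)) atTop atTop :=
    Real.tendsto_sqrt_atTop.comp (hkap.const_mul_atTop (by norm_num))
  have hwi : Tendsto (fun n => (hW r (N n))⁻¹) atTop (𝓝 0) := hw.inv_tendsto_atTop
  have hfst : Tendsto (Prod.fst : ℕ × ℝ → ℕ) (atTop ×ˢ 𝓟 (Set.Icc 0 R)) atTop := tendsto_fst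
  have hwi' := hwi.comp hfst
  have hki : Tendsto (fun p : ℕ × ℝ => 2 * R^2 * Real.exp (R^2) / ((N p.1:ℝ) - r))
      (atTop ×ˢ 𝓟 (Set.Icc 0 R)) (𝓝 0) :=
    (tendsto_const_nhds.div_atTop hkap).comp hfst
  have hS : ∀ᶠ p : ℕ × ℝ in (atTop ×ˢ 𝓟 (Set.Icc 0 R)),
      r < N p.1 ∧ Odd (N p.1 - r) ∧ p.2 ∈ Set.Icc 0 R := by
    rw [eventually_prod_principal_iff]
    filter_upwards [hNr, ho] with n h1 h2 s hs
    exact ⟨h1, h2, hs⟩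
  have ht : Tendsto (fun p : ℕ × ℝ => p.2 / hW r (N p.1)) (atTop ×ˢ 𝓟 (Set.Icc 0 R)) (𝓝 0) := by
    have h0 : Tendsto (fun p : ℕ × ℝ => R * (hW r (N p.1))⁻¹) (atTop ×ˢ 𝓟 (Set.Icc 0 R)) (𝓝 0) := by
      simpa using hwi'.const_mul R
    refine squeeze_zero_norm' ?_ h0
    filter_upwards [hS] with p hp
    have := hW_pos r _ hp.1
    rw [Real.norm_eq_abs, abs_div, abs_of_nonneg hp.2.2.1, abs_of_pos this, div_eq_mul_inv]
    have := hp.2.2.2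
    gcongr
  have hA : Tendsto (fun p => hG r N r p - Real.sin p.2) (atTop ×ˢ 𝓟 (Set.Icc 0 R)) (𝓝 0) := by
    refine squeeze_zero_norm' ?_ hki
    filter_upwards [hS] with p hp
    exact (herm_bound r _ hp.1 hp.2.1 R p.2 hp.2.2).1
  have hB : Tendsto (fun p => hG r N (r+1) p / hW r (N p.1) - Real.cos p.2)
      (atTop ×ˢ 𝓟 (Set.Icc 0 R)) (𝓝 0) := by
    refine squeeze_zero_norm' ?_ hki
    filter_upwards [hS] with p hp
    exact (herm_bound r _ hp.1 hp.2.1 R p.2 hp.2.2).2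
  have hsin : (fun p : ℕ × ℝ => Real.sin p.2) =O[atTop ×ˢ 𝓟 (Set.Icc 0 R)] (fun _ => (1:ℝ)) :=
    IsBigO.of_bound 1 (Eventually.of_forall fun p => by simpa using Real.abs_sin_le_one p.2)
  have hcos : (fun p : ℕ × ℝ => Real.cos p.2) =O[atTop ×ˢ 𝓟 (Set.Icc 0 R)] (fun _ => (1:ℝ)) :=
    IsBigO.of_bound 1 (Eventually.of_forall fun p => by simpa using Real.abs_cos_le_one p.2)
  have Qr : (hG r N r) =O[atTop ×ˢ 𝓟 (Set.Icc 0 R)] (fun _ => (1:ℝ)) ∧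
      (fun p => hG r N (r+1) p / hW r (N p.1)) =O[atTop ×ˢ 𝓟 (Set.Icc 0 R)] (fun _ => (1:ℝ)) := by
    constructor
    · refine ((hA.isBigO_one ℝ).add hsin).congr_left fun p => ?_
      ring
    · refine ((hB.isBigO_one ℝ).add hcos).congr_left fun p => ?_
      ring
  have step0 : ∀ i < r, ((hG r N (i+1)) =O[atTop ×ˢ 𝓟 (Set.Icc 0 R)] (fun _ => (1:ℝ)) ∧
      (fun p => hG r N (i+1+1) p / hW r (N p.1)) =O[atTop ×ˢ 𝓟 (Set.Icc 0 R)] (fun _ => (1:ℝ))) →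
      Tendsto (hG r N i) (atTop ×ˢ 𝓟 (Set.Icc 0 R)) (𝓝 0) := by
    intro i hi ⟨h1, h2⟩
    have c1 : Tendsto (fun p : ℕ × ℝ => p.2 / hW r (N p.1) / ((N p.1 : ℝ) - i))
        (atTop ×ˢ 𝓟 (Set.Icc 0 R)) (𝓝 0) := by
      have ht' : Tendsto (fun p : ℕ × ℝ => ‖p.2 / hW r (N p.1)‖) (atTop ×ˢ 𝓟 (Set.Icc 0 R)) (𝓝 0) := by
        simpa using ht.norm
      refine squeeze_zero_norm' ?_ ht'
      filter_upwards [hS] with p hp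
      have hir : (i:ℝ) < r := by exact_mod_cast hi
      have hrN : (r:ℝ) + 1 ≤ N p.1 := by exact_mod_cast hp.1
      rw [norm_div]
      refine div_le_self (norm_nonneg _) ?_
      rw [Real.norm_eq_abs]
      exact le_trans (by linarith) (le_abs_self _)
    have c2 : Tendsto (fun p : ℕ × ℝ => hW r (N p.1) / (2 * ((N p.1 : ℝ) - i)))
        (atTop ×ˢ 𝓟 (Set.Icc 0 R)) (𝓝 0) := by
      refine squeeze_zero_norm' ?_ hwi'
      filter_upwards [hS] with p hp
      have hw := hW_pos r _ hp.1
      have hw2 := hW_sq r _ hp.1.le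
      have hir : (i:ℝ) < r := by exact_mod_cast hi
      have hrN : (r:ℝ) < N p.1 := by exact_mod_cast hp.1
      simp only [Function.comp]
      rw [Real.norm_eq_abs, abs_of_nonneg (div_nonneg hw.le (by linarith)),
        div_le_iff₀ (by linarith), ← div_eq_inv_mul, le_div_iff₀ hw]
      nlinarith
    have k1 := ((isLittleO_one_iff ℝ).mpr c1).mul_isBigO h1
    have k2 := ((isLittleO_one_iff ℝ).mpr c2).mul_isBigO h2
    have k3 := k1.sub k2
    simp only [mul_one] at k3
    have k4 := (isLittleO_one_iff ℝ).mp k3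
    refine k4.congr' ?_
    filter_upwards [hS] with p hp
    have hw := hW_pos r _ hp.1
    have hd := hD_ne r _ hp.1 hp.2.1
    have hir : (i:ℝ) < r := by exact_mod_cast hi
    have hrN : (r:ℝ) < N p.1 := by exact_mod_cast hp.1
    have hNi : (N p.1 : ℝ) - i ≠ 0 := by linarith
    simp only [hG, show i + 1 + 1 = i + 2 from rfl]
    rw [physHermite_ode_iter]
    simp only [eval_sub, eval_mul, eval_X, eval_natCast, eval_ofNat]
    field_simp
    ring
  have Q : ∀ j ≤ r, (hG r N (r-j)) =O[atTop ×ˢ 𝓟 (Set.Icc 0 R)] (fun _ => (1:ℝ)) ∧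
      (fun p => hG r N (r-j+1) p / hW r (N p.1)) =O[atTop ×ˢ 𝓟 (Set.Icc 0 R)] (fun _ => (1:ℝ)) := by
    intro j
    induction j with
    | zero => intro _; simpa using Qr
    | succ j ih =>
      intro hj
      have q := ih (by omega)
      have e : r - j = r - (j+1) + 1 := by omega
      rw [e] at q
      refine ⟨(step0 _ (by omega) q).isBigO_one ℝ, ?_⟩
      have := q.1.mul (hwi'.isBigO_one ℝ)
      simpa [div_eq_mul_inv, Function.comp_def] using this
  refine ⟨ht, hwi', hA, hB, ?_, ?_⟩
  · intro i hi
    have := (Q (r-i) (by omega)).1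
    rwa [Nat.sub_sub_self hi] at this
  · intro i hi
    have := Q (r-(i+1)) (by omega)
    rw [Nat.sub_sub_self hi] at this
    exact step0 i hi this

lemma tendstoUniformlyOn_of_prod (F : ℕ → ℝ → ℝ) (f : ℝ → ℝ) (S : Set ℝ)
    (h : Tendsto (fun p : ℕ × ℝ => F p.1 p.2 - f p.2) (atTop ×ˢ 𝓟 S) (𝓝 0)) :
    TendstoUniformlyOn F f atTop S := by
  rw [Metric.tendstoUniformlyOn_iff]
  intro ε hε
  have := (Metric.tendsto_nhds.mp h) ε hε
  rw [eventually_prod_principal_iff] at this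
  filter_upwards [this] with n hn s hs
  have := hn s hs
  rw [dist_comm, Real.dist_eq]
  simpa [Real.dist_eq] using this

lemma F_asymp (r : ℕ) (N : ℕ → ℕ) (hN : Tendsto N atTop atTop)
    (ho : ∀ᶠ n in atTop, Odd (N n - r)) (c : Fin (r+1) → ℝ[X]) (P : ℕ → ℝ[X])
    (hP : ∀ n, P n = ∑ i : Fin (r+1), c i * derivative^[(i:ℕ)] (physHermite (N n))) (R : ℝ) :
    TendstoUniformlyOn (fun n s => (P n).eval (s / hW r (N n)) / hD r (N n))
      (fun s => (c (Fin.last r)).eval 0 * Real.sin s) atTop (Set.Icc 0 R) ∧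
    TendstoUniformlyOn (fun n s => (derivative (P n)).eval (s / hW r (N n)) /
      (hD r (N n) * hW r (N n)))
      (fun s => (c (Fin.last r)).eval 0 * Real.cos s) atTop (Set.Icc 0 R) := by
  obtain ⟨ht, hwi, hA, hB, hO, ho⟩ := herm_asymp r N hN ho R
  have hc : ∀ p : ℝ[X], Tendsto (fun q : ℕ × ℝ => p.eval (q.2 / hW r (N q.1)))
      (atTop ×ˢ 𝓟 (Set.Icc 0 R)) (𝓝 (p.eval 0)) := fun p =>
    (p.continuous.tendsto 0).comp ht
  have hlim : ∀ f : ℕ × ℝ → ℝ, (∃ M, ∀ q, |f q| ≤ M) → ∀ p : ℝ[X],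
      Tendsto (fun q : ℕ × ℝ => (p.eval (q.2 / hW r (N q.1)) - p.eval 0) * f q)
      (atTop ×ˢ 𝓟 (Set.Icc 0 R)) (𝓝 0) := by
    rintro f ⟨M, hM⟩ p
    have h1 : Tendsto (fun q : ℕ × ℝ => (p.eval (q.2 / hW r (N q.1)) - p.eval 0))
      (atTop ×ˢ 𝓟 (Set.Icc 0 R)) (𝓝 0) := by simpa using (hc p).sub_const (p.eval 0)
    have h2 : f =O[atTop ×ˢ 𝓟 (Set.Icc 0 R)] (fun _ => (1:ℝ)) :=
      IsBigO.of_bound M (Eventually.of_forall fun p => by simpa using hM p)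
    have := ((isLittleO_one_iff ℝ).mpr h1).mul_isBigO h2
    simp only [mul_one] at this
    exact (isLittleO_one_iff ℝ).mp this
  have hOw : ∀ i ≤ r, Tendsto (fun p => hG r N i p * (hW r (N p.1))⁻¹)
      (atTop ×ˢ 𝓟 (Set.Icc 0 R)) (𝓝 0) := by
    intro i hi
    have := (hO i hi).mul_isLittleO ((isLittleO_one_iff ℝ).mpr hwi)
    simp only [mul_one] at this
    exact (isLittleO_one_iff ℝ).mp this
  constructor
  · apply tendstoUniformlyOn_of_prod
    have h1 : Tendsto (fun p : ℕ × ℝ => ∑ i : Fin r, (c i.castSucc).eval (p.2 / hW r (N p.1)) *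
        hG r N i p) (atTop ×ˢ 𝓟 (Set.Icc 0 R)) (𝓝 (∑ i : Fin r, (c i.castSucc).eval 0 * 0)) :=
      tendsto_finsetSum _ fun i _ => (hc _).mul (ho i i.2)
    have h2 := (hc (c (Fin.last r))).mul hA
    have h3 := hlim (fun q => Real.sin q.2) ⟨1, fun q => Real.abs_sin_le_one _⟩ (c (Fin.last r))
    have h4 := (h1.add h2).add h3
    simp only [mul_zero, Finset.sum_const_zero, add_zero] at h4
    refine h4.congr fun p => ?_
    rw [hP, eval_finsetSum, Finset.sum_div, Fin.sum_univ_castSucc]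
    simp only [eval_mul, mul_div_assoc, Fin.val_castSucc, Fin.val_last, hG]
    ring
  · apply tendstoUniformlyOn_of_prod
    have h1 : Tendsto (fun p : ℕ × ℝ => ∑ i : Fin r, (c i.castSucc).eval (p.2 / hW r (N p.1)) *
        (hG r N (i+1) p * (hW r (N p.1))⁻¹)) (atTop ×ˢ 𝓟 (Set.Icc 0 R))
        (𝓝 (∑ i : Fin r, (c i.castSucc).eval 0 * 0)) :=
      tendsto_finsetSum _ fun i _ => (hc _).mul (hOw (i+1) i.2)
    have h1' : Tendsto (fun p : ℕ × ℝ => ∑ i : Fin (r+1),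
        (derivative (c i)).eval (p.2 / hW r (N p.1)) *
        (hG r N i p * (hW r (N p.1))⁻¹)) (atTop ×ˢ 𝓟 (Set.Icc 0 R))
        (𝓝 (∑ i : Fin (r+1), (derivative (c i)).eval 0 * 0)) :=
      tendsto_finsetSum _ fun i _ => (hc _).mul (hOw i (Nat.lt_succ_iff.mp i.2))
    have h2 := (hc (c (Fin.last r))).mul hB
    have h3 := hlim (fun q => Real.cos q.2) ⟨1, fun q => Real.abs_cos_le_one _⟩ (c (Fin.last r))
    have h4 := (h1'.add (h1.add h2)).add h3
    simp only [mul_zero, Finset.sum_const_zero, add_zero] at h4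
    refine h4.congr fun p => ?_
    have e : derivative (P p.1) = ∑ i : Fin (r+1), derivative (c i) * derivative^[(i:ℕ)] (physHermite (N p.1))
        + ∑ i : Fin (r+1), c i * derivative^[(i:ℕ)+1] (physHermite (N p.1)) := by
      rw [hP, derivative_sum, ← Finset.sum_add_distrib]
      refine Finset.sum_congr rfl fun i _ => ?_
      rw [derivative_mul, ← Function.iterate_succ_apply' (⇑derivative)]
    rw [e, eval_add, add_div, eval_finsetSum, eval_finsetSum, Finset.sum_div, Finset.sum_div,
      Fin.sum_univ_castSucc (n := r) (f := fun i => eval _ (c i * _) / _)]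
    simp only [eval_mul, mul_div_assoc, Fin.val_castSucc, Fin.val_last, hG, ← div_eq_mul_inv, div_div]
    ring

end Asymp

/-- Theorem 1.1(odd), eq. (11): for an even partition `λ` and fixed `k ∈ ℤ`,
`lim_{n→∞} 2√n · x_{k+n+1-|λ|/2, 2n+1} = kπ`, where `x_{1,m} < ⋯ < x_{m-|λ|,m}`
enumerate the real zeros of `P_m` (for `m ≥ |λ| + λ_1`). -/
theorem zero_spacing_odd
    (r : ℕ) (lam : Fin r → ℕ) (hpart : IsEvenPartition r lam)
    (x : ℕ → ℕ → ℝ)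
    (hx : ∀ m : ℕ, (∀ i : Fin r, (∑ i, lam i) + lam i ≤ m) →
      StrictMonoOn (x m) (Set.Icc 1 (m - ∑ i, lam i)) ∧
      ∀ t : ℝ, (XHermite r lam m).eval t = 0 ↔
        ∃ j : ℕ, 1 ≤ j ∧ j ≤ m - (∑ i, lam i) ∧ x m j = t)
    (k : ℤ) :
    Filter.Tendsto
      (fun n : ℕ => 2 * Real.sqrt n *
        x (2 * n + 1) (k + (n : ℤ) + 1 - ((∑ i, lam i : ℕ) : ℤ) / 2).toNat)
      Filter.atTop (nhds ((k : ℝ) * Real.pi)) := by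
  classical
  set Λ := ∑ i, lam i with hΛ
  obtain ⟨L, hL⟩ : ∃ L, Λ = 2 * L := by
    obtain ⟨L, hL⟩ := even_sum_lam r lam hpart
    exact ⟨L, by rw [hΛ, hL]; ring⟩
  obtain ⟨c, hclast, hexp⟩ := XHermite_expand r lam
  have hc0 : (c (Fin.last r)).eval 0 ≠ 0 := by rw [hclast]; exact genHermite_eval_zero r lam hpart
  let N : ℕ → ℕ := fun n => 2 * n + 1 + r - Λ
  let P : ℕ → ℝ[X] := fun n => XHermite r lam (2 * n + 1)
  let K : ℕ → ℕ := fun n => n - L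
  let y : ℕ → ℕ → ℝ := fun n j => hW r (N n) * x (2 * n + 1) j
  have hNt : Filter.Tendsto N Filter.atTop Filter.atTop := by
    refine Filter.tendsto_atTop.mpr fun b => ?_
    filter_upwards [Filter.eventually_ge_atTop (b + Λ)] with n hn
    simp only [N]; omega
  have hKt : Filter.Tendsto K Filter.atTop Filter.atTop := by
    refine Filter.tendsto_atTop.mpr fun b => ?_
    filter_upwards [Filter.eventually_ge_atTop (b + L)] with n hn
    simp only [K]; omega
  have hodd : ∀ᶠ n in Filter.atTop, Odd (N n - r) := by
    filter_upwards [Filter.eventually_ge_atTop Λ] with n hn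
    rw [Nat.odd_iff]; simp only [N]; omega
  have hrN : ∀ᶠ n in Filter.atTop, r < N n := hNt.eventually_gt_atTop r
  have hF := F_asymp r N hNt hodd c P (fun n => hexp (2 * n + 1))
  have hx' : ∀ᶠ n in Filter.atTop, StrictMonoOn (x (2 * n + 1)) (Set.Icc 1 (2 * K n + 1)) ∧
      ∀ t : ℝ, (P n).eval t = 0 ↔ ∃ j : ℕ, 1 ≤ j ∧ j ≤ 2 * K n + 1 ∧ x (2 * n + 1) j = t := by
    filter_upwards [Filter.eventually_ge_atTop (Λ + Λ)] with n hn
    have := hx (2 * n + 1) (fun i => by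
      have : lam i ≤ Λ := Finset.single_le_sum (fun _ _ => Nat.zero_le _) (Finset.mem_univ i)
      omega)
    have e : 2 * n + 1 - Λ = 2 * K n + 1 := by simp only [K]; omega
    rw [e] at this
    exact this
  have hsymm : ∀ᶠ n in Filter.atTop, ∀ j ∈ Set.Icc 1 (2 * K n + 1),
      x (2 * n + 1) (2 * K n + 2 - j) = - x (2 * n + 1) j := by
    filter_upwards [hx'] with n hn
    exact enum_symm (K n) _ hn.1 (fun t => (P n).eval t = 0) hn.2
      (fun t ht => XHermite_neg r lam _ t ht)
  have h0 : ∀ᶠ n in Filter.atTop, y n (K n + 1) = 0 := by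
    filter_upwards [hsymm] with n hn
    have := hn (K n + 1) ⟨by omega, by omega⟩
    have e : 2 * K n + 2 - (K n + 1) = K n + 1 := by omega
    rw [e] at this
    have : x (2 * n + 1) (K n + 1) = 0 := by linarith
    simp only [y, this, mul_zero]
  have hy : ∀ᶠ n in Filter.atTop, StrictMonoOn (y n) (Set.Icc 1 (2 * K n + 1)) ∧
      ∀ t, (P n).eval (t / hW r (N n)) / hD r (N n) = 0 ↔
        ∃ j, 1 ≤ j ∧ j ≤ 2 * K n + 1 ∧ y n j = t := by
    filter_upwards [hx', hrN, hodd] with n hn h1 h2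
    have hw := hW_pos r _ h1
    have hd := hD_ne r _ h1 h2
    refine ⟨fun a ha b hb hab => mul_lt_mul_of_pos_left (hn.1 ha hb hab) hw, fun t => ?_⟩
    rw [div_eq_zero_iff, or_iff_left hd, hn.2]
    refine exists_congr fun j => and_congr_right fun _ => and_congr_right fun _ => ?_
    simp only [y]
    rw [eq_div_iff hw.ne', mul_comm]
  have main := zeros_step (fun n s => (P n).eval (s / hW r (N n)) / hD r (N n))
    (fun n s => (derivative (P n)).eval (s / hW r (N n)) / (hD r (N n) * hW r (N n)))
    _ hc0 (Filter.Eventually.of_forall fun n s => hasDerivAt_scaled _ _ _ _)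
    (fun R => (hF R).1) (fun R => (hF R).2) K hKt y hy h0
  have hidx : Filter.Tendsto (fun n : ℕ => y n (k + (n : ℤ) + 1 - (Λ : ℤ) / 2).toNat)
      Filter.atTop (nhds ((k : ℝ) * Real.pi)) := by
    rcases Int.eq_nat_or_neg k with ⟨q, rfl | rfl⟩
    · refine Filter.Tendsto.congr' ?_ (by simpa using main q)
      filter_upwards [Filter.eventually_ge_atTop L] with n hn
      congr 1
      simp only [K]; omega
    · have := (main q).neg
      have e : ((-(q:ℤ) : ℤ) : ℝ) * Real.pi = -(q * Real.pi) := by push_cast; ring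
      rw [e]
      refine Filter.Tendsto.congr' ?_ this
      filter_upwards [Filter.eventually_ge_atTop (L + q), hsymm] with n hn hs
      have hs' := hs (K n + 1 + q) ⟨by omega, by simp only [K]; omega⟩
      have e2 : (-(q:ℤ) + (n:ℤ) + 1 - (Λ:ℤ)/2).toNat = 2 * K n + 2 - (K n + 1 + q) := by
        simp only [K]; omega
      simp only [y]
      rw [e2, hs']; ring
  have hratio : Filter.Tendsto (fun n : ℕ => 2 * Real.sqrt n / hW r (N n))
      Filter.atTop (nhds 1) := by
    have h1 : Filter.Tendsto (fun n : ℕ => 1 + (1 - (Λ:ℝ)) / 2 / (n:ℝ)) Filter.atTop (nhds 1) := by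
      simpa using (tendsto_const_div_atTop_nhds_zero_nat ((1 - (Λ:ℝ)) / 2)).const_add 1
    have h2 := (h1.sqrt).inv₀ (by simp)
    simp only [Real.sqrt_one, inv_one] at h2
    refine h2.congr' ?_
    filter_upwards [Filter.eventually_ge_atTop (Λ + 1), hrN] with n hn hr
    have hn0 : (0:ℝ) < n := by exact_mod_cast (by omega : 0 < n)
    have e : hW r (N n) = 2 * Real.sqrt n * Real.sqrt (1 + (1 - (Λ:ℝ)) / 2 / (n:ℝ)) := by
      have e1 : (N n : ℝ) - r = 2 * n + 1 - Λ := by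
        have : N n + Λ = 2 * n + 1 + r := by simp only [N]; omega
        have : (N n : ℝ) + Λ = 2 * n + 1 + r := by exact_mod_cast this
        linarith
      rw [hW, e1, mul_assoc, ← Real.sqrt_mul hn0.le]
      have e2 : (2:ℝ) * (2 * n + 1 - Λ) = 2^2 * (n * (1 + (1 - (Λ:ℝ)) / 2 / (n:ℝ))) := by
        field_simp; ring
      rw [e2, Real.sqrt_mul (by positivity), Real.sqrt_sq (by norm_num)]
    have hs : Real.sqrt n ≠ 0 := (Real.sqrt_pos.mpr hn0).ne'
    rw [e]
    have hs2 := hW_pos r _ hr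
    rw [e] at hs2
    have hs3 : Real.sqrt (1 + (1 - (Λ:ℝ)) / 2 / (n:ℝ)) ≠ 0 := by
      intro h; rw [h] at hs2; simp at hs2
    field_simp
  have fin := hratio.mul hidx
  rw [one_mul] at fin
  refine fin.congr' ?_
  filter_upwards [hrN] with n hn
  have hw := hW_pos r _ hn
  simp only [y]
  field_simp
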